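/- Let q = p^m ≡ 5 (mod 8) be a prime power with primitive element α of F_q, and let q = s² + t² be the Katre–Rajwade-normalized representation. Then D = {C_0^4, C_3^4} is: (i) if t = −2, a (q,2,(q−1)/4;(q−5)/8,(q+3)/8)-EPDF relative to C_0^2 and a (q,2,(q−1)/4,(q−5)/8)-DDF; (ii) if t = 2, a (q,2,(q−1)/4;(q+3)/8,(q−5)/8)-EPDF relative to C_0^2 and a (q,2,(q−1)/4,(q−5)/8)-DDF. -/

import Mathlib

open Finset

section Defs

variable {G : Type*} [AddCommGroup G] [Fintype G] [DecidableEq G]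

/-- The multiset `Δ(D)` of internal differences `x - y` (for `x ≠ y` in `D`). -/
def intDiff (D : Finset G) : Multiset G :=
  ((D ×ˢ D).filter (fun p => p.1 ≠ p.2)).val.map (fun p => p.1 - p.2)

/-- The multiset `Δ(D, E)` of external differences `x - y` for `x ∈ D`, `y ∈ E`. -/
def extDiff (D E : Finset G) : Multiset G :=
  (D ×ˢ E).val.map (fun p => p.1 - p.2)

/-- The finset `G^*` of nonzero elements of `G`. -/
def Gstar (G : Type*) [AddCommGroup G] [Fintype G] [DecidableEq G] : Finset G :=
  Finset.univ.erase 0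

/-- `A` is a `(v, k, lam, mu)` partial difference set in `G`:
`Δ(A) = lam • A^* + mu • (G^* \ A)`. -/
def IsPDS (A : Finset G) (v k lam mu : ℕ) : Prop :=
  Fintype.card G = v ∧ A.card = k ∧
    intDiff A = lam • (A.erase 0).val + mu • (Gstar G \ A).val

/-- `D` is a `(v, k, lam, mu)` skew partial difference set corresponding to the
`(v, k, lam, mu)`-PDS `A`: `Δ(D) = lam • A^* + mu • (G^* \ A)`. -/
def IsSkewPDS (D A : Finset G) (v k lam mu : ℕ) : Prop :=
  IsPDS A v k lam mu ∧ D.card = k ∧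
    intDiff D = lam • (A.erase 0).val + mu • (Gstar G \ A).val

/-- `D` is an `(n, m, k₁, …, k_m; lam, mu)` disjoint partial difference family relative
to `T`: the `D i` are pairwise disjoint subsets of `G^*` of sizes `k i`, and
`∑ i, Δ(D i) = lam • T + mu • (G^* \ T)`. -/
def IsDPDF {ι : Type*} [Fintype ι] (D : ι → Finset G) (n m : ℕ) (k : ι → ℕ)
    (T : Finset G) (lam mu : ℕ) : Prop :=
  Fintype.card G = n ∧ Fintype.card ι = m ∧
    (∀ i, (0 : G) ∉ D i) ∧ (∀ i, (D i).card = k i) ∧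
    (Pairwise (fun i j => Disjoint (D i) (D j))) ∧
    ∑ i, intDiff (D i) = lam • T.val + mu • (Gstar G \ T).val

/-- `D` is an `(n, m, k₁, …, k_m; lam, mu)` external partial difference family relative
to `T`: the `D i` are pairwise disjoint subsets of `G^*` of sizes `k i`, and
`∑_{i ≠ j}, Δ(D i, D j) = lam • T + mu • (G^* \ T)`. -/
def IsEPDF {ι : Type*} [Fintype ι] [DecidableEq ι] (D : ι → Finset G) (n m : ℕ)
    (k : ι → ℕ) (T : Finset G) (lam mu : ℕ) : Prop :=
  Fintype.card G = n ∧ Fintype.card ι = m ∧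
    (∀ i, (0 : G) ∉ D i) ∧ (∀ i, (D i).card = k i) ∧
    (Pairwise (fun i j => Disjoint (D i) (D j))) ∧
    ∑ i, ∑ j ∈ Finset.univ.erase i, extDiff (D i) (D j)
      = lam • T.val + mu • (Gstar G \ T).val

/-- `D` is an `(n, m, k₁, …, k_m, lam)` disjoint difference family:
`∑ i, Δ(D i) = lam • G^*`. -/
def IsDDF {ι : Type*} [Fintype ι] (D : ι → Finset G) (n m : ℕ) (k : ι → ℕ)
    (lam : ℕ) : Prop :=
  Fintype.card G = n ∧ Fintype.card ι = m ∧
    (∀ i, (0 : G) ∉ D i) ∧ (∀ i, (D i).card = k i) ∧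
    (Pairwise (fun i j => Disjoint (D i) (D j))) ∧
    ∑ i, intDiff (D i) = lam • (Gstar G).val

/-- `D` is an `(n, m, k₁, …, k_m, lam)` external difference family:
`∑_{i ≠ j}, Δ(D i, D j) = lam • G^*`. -/
def IsEDF {ι : Type*} [Fintype ι] [DecidableEq ι] (D : ι → Finset G) (n m : ℕ)
    (k : ι → ℕ) (lam : ℕ) : Prop :=
  Fintype.card G = n ∧ Fintype.card ι = m ∧
    (∀ i, (0 : G) ∉ D i) ∧ (∀ i, (D i).card = k i) ∧
    (Pairwise (fun i j => Disjoint (D i) (D j))) ∧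
    ∑ i, ∑ j ∈ Finset.univ.erase i, extDiff (D i) (D j) = lam • (Gstar G).val

end Defs

section Cyclotomy

variable {F : Type*} [Field F] [Fintype F] [DecidableEq F]

/-- The cyclotomic class `C_i^e = α^i ⟨α^e⟩` of order `e` in the finite field `F`,
with respect to the primitive element `α`.  (Since `α` has multiplicative order at most
`|F| - 1`, letting `j` range over `0, …, |F| - 1` captures the whole class.) -/
def cycClass (α : F) (e i : ℕ) : Finset F :=
  (Finset.range (Fintype.card F)).image (fun j => α ^ (e * j + i))

/-- `α` is a primitive element of the finite field `F`: every nonzero element of `F`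
is a power of `α`. -/
def IsPrimitiveElt (α : F) : Prop :=
  ∀ x : F, x ≠ 0 → ∃ n : ℕ, α ^ n = x

end Cyclotomy

set_option linter.unusedSectionVars false

section Basics

variable {F : Type*} [Field F] [Fintype F] [DecidableEq F]

lemma prim_ne_zero {k : ℕ} (hk : Odd k) (hc : Fintype.card F = 4 * k + 1) {α : F}
    (hα : IsPrimitiveElt α) : α ≠ 0 := by
  rintro rfl
  have hk0 : 0 < k := hk.pos
  have h : (Finset.univ : Finset F) ⊆ {0, 1} := by
    intro x _
    by_cases hx : x = 0
    · simp [hx]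
    · obtain ⟨n, rfl⟩ := hα x hx
      rcases Nat.eq_zero_or_pos n with h | h
      · simp [h]
      · simp [zero_pow h.ne']
  have := (Finset.card_le_card h).trans Finset.card_le_two
  rw [Finset.card_univ] at this
  omega

lemma prim_pow {k : ℕ} (hk : Odd k) (hc : Fintype.card F = 4 * k + 1) {α : F}
    (hα : IsPrimitiveElt α) : α ^ (4 * k) = 1 := by
  have := FiniteField.pow_card_sub_one_eq_one α (prim_ne_zero hk hc hα)
  rwa [hc, Nat.add_sub_cancel] at this

lemma prim_order {k : ℕ} (hk : Odd k) (hc : Fintype.card F = 4 * k + 1) {α : F}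
    (hα : IsPrimitiveElt α) : orderOf α = 4 * k := by
  have hk0 : 0 < k := hk.pos
  have h1 := orderOf_dvd_of_pow_eq_one (prim_pow hk hc hα)
  have hpos : 0 < orderOf α := Nat.pos_of_dvd_of_pos h1 (by omega)
  apply le_antisymm (Nat.le_of_dvd (by omega) h1)
  have h : (Finset.univ.erase (0 : F)) ⊆ (range (orderOf α)).image (fun n => α ^ n) := by
    intro x hx
    obtain ⟨n, rfl⟩ := hα x (by simpa using hx)
    exact mem_image.2 ⟨n % orderOf α, mem_range.2 (Nat.mod_lt _ hpos), pow_mod_orderOf _ _⟩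
  have := (Finset.card_le_card h).trans Finset.card_image_le
  rw [card_erase_of_mem (mem_univ _), card_univ, hc, card_range] at this
  omega

lemma prim_exists_lt {k : ℕ} (hk : Odd k) (hc : Fintype.card F = 4 * k + 1) {α : F}
    (hα : IsPrimitiveElt α) {x : F} (hx : x ≠ 0) : ∃ n < 4 * k, α ^ n = x := by
  have hk0 : 0 < k := hk.pos
  obtain ⟨n, rfl⟩ := hα x hx
  refine ⟨n % (4 * k), Nat.mod_lt _ (by omega), ?_⟩
  rw [← prim_order hk hc hα]
  exact pow_mod_orderOf _ _

lemma prim_inj {k : ℕ} (hk : Odd k) (hc : Fintype.card F = 4 * k + 1) {α : F}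
    (hα : IsPrimitiveElt α) {a b : ℕ} (ha : a < 4 * k) (hb : b < 4 * k)
    (h : α ^ a = α ^ b) : a = b := by
  apply pow_injOn_Iio_orderOf (x := α) _ _ h <;> simpa [prim_order hk hc hα]

lemma sum_nonzero {k : ℕ} (hk : Odd k) (hc : Fintype.card F = 4 * k + 1) {α : F}
    (hα : IsPrimitiveElt α) (f : F → ℤ) :
    ∑ x, f x = f 0 + ∑ n ∈ range (4 * k), f (α ^ n) := by
  rw [← Finset.add_sum_erase _ _ (mem_univ (0 : F))]
  congr 1
  symm
  apply Finset.sum_bij (fun n _ => α ^ n)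
  · intro n _
    simpa using fun h => absurd h (prim_ne_zero hk hc hα)
  · intro a ha b hb h
    exact prim_inj hk hc hα (mem_range.1 ha) (mem_range.1 hb) h
  · intro x hx
    obtain ⟨n, hn, h⟩ := prim_exists_lt hk hc hα (x := x) (by simpa using hx)
    exact ⟨n, mem_range.2 hn, h⟩
  · simp

lemma ringChar_ne {k : ℕ} (hc : Fintype.card F = 4 * k + 1) : ringChar F ≠ 2 := by
  intro h
  have := FiniteField.even_card_of_char_two h
  omega

lemma chi_cast {k : ℕ} (hc : Fintype.card F = 4 * k + 1) (x : F) :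
    ((quadraticChar F x : ℤ) : F) = x ^ (2 * k) := by
  rw [quadraticChar_eq_pow_of_char_ne_two' (ringChar_ne hc), hc]
  congr 1; omega

lemma chi_mul_self {x : F} (hx : x ≠ 0) : quadraticChar F x * quadraticChar F x = 1 := by
  rw [← sq]; exact quadraticChar_sq_one hx

lemma chi_neg_one {k : ℕ} (hc : Fintype.card F = 4 * k + 1) : quadraticChar F (-1) = 1 := by
  rw [quadraticChar_one_iff_isSquare (by simp), FiniteField.isSquare_neg_one_iff]
  omega

lemma chi_two {k : ℕ} (hk : Odd k) (hc : Fintype.card F = 4 * k + 1) :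
    quadraticChar F 2 = -1 := by
  rw [quadraticChar_neg_one_iff_not_isSquare, FiniteField.isSquare_two_iff]
  obtain ⟨j, rfl⟩ := hk
  omega

lemma prim_half {k : ℕ} (hk : Odd k) (hc : Fintype.card F = 4 * k + 1) {α : F}
    (hα : IsPrimitiveElt α) : α ^ (2 * k) = -1 := by
  have hk0 : 0 < k := hk.pos
  have h1 : α ^ (2 * k) * α ^ (2 * k) = 1 := by
    rw [← pow_add, ← prim_pow hk hc hα]; congr 1; omega
  rcases mul_self_eq_one_iff.1 h1 with h | h
  · exfalso
    have := prim_inj hk hc hα (a := 2 * k) (b := 0) (by omega) (by omega) (by simpa using h)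
    omega
  · exact h

lemma chi_prim {k : ℕ} (hk : Odd k) (hc : Fintype.card F = 4 * k + 1) {α : F}
    (hα : IsPrimitiveElt α) : quadraticChar F α = -1 := by
  rcases quadraticChar_dichotomy (prim_ne_zero hk hc hα) with h | h
  · exfalso
    have h2 := chi_cast hc α
    rw [h, prim_half hk hc hα] at h2
    push_cast at h2
    exact Ring.neg_one_ne_one_of_char_ne_two (ringChar_ne hc) h2.symm
  · exact h

lemma chi_I {k : ℕ} (hk : Odd k) (hc : Fintype.card F = 4 * k + 1) {α : F}
    (hα : IsPrimitiveElt α) : quadraticChar F (α ^ k) = -1 := by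
  rw [map_pow, chi_prim hk hc hα, hk.neg_one_pow]

/-- functions depending only on the quadratic class -/
lemma sum_class {k : ℕ} (hc : Fintype.card F = 4 * k + 1) (f : F → ℤ) (A B : ℤ)
    (h0 : f 0 = 0) (h1 : ∀ x, quadraticChar F x = 1 → f x = A)
    (h2 : ∀ x, quadraticChar F x = -1 → f x = B) :
    ∑ x, f x = 2 * k * (A + B) ∧ ∑ x, quadraticChar F x * f x = 2 * k * (A - B) := by
  have hs := quadraticChar_sum_zero (F := F) (ringChar_ne hc)
  have hs2 : ∑ x : F, quadraticChar F x * quadraticChar F x = 4 * k := by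
    rw [← Finset.add_sum_erase _ _ (mem_univ (0 : F)), quadraticChar_zero,
      Finset.sum_congr rfl (g := fun _ => (1 : ℤ)) (fun x hx => chi_mul_self (by simpa using hx))]
    simp [card_erase_of_mem, hc]
  have key : ∀ x, 2 * f x = quadraticChar F x * quadraticChar F x * (A + B)
      + quadraticChar F x * (A - B) := by
    intro x
    by_cases hx : x = 0
    · subst hx; simp [h0]
    · rcases quadraticChar_dichotomy hx with h | h
      · rw [h1 x h, h]; ring
      · rw [h2 x h, h]; ring
  have key2 : ∀ x, 2 * (quadraticChar F x * f x) = quadraticChar F x * (A + B)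
      + quadraticChar F x * quadraticChar F x * (A - B) := by
    intro x
    by_cases hx : x = 0
    · subst hx; simp [h0]
    · rcases quadraticChar_dichotomy hx with h | h
      · rw [h1 x h, h]; ring
      · rw [h2 x h, h]; ring
  constructor
  · have : 2 * ∑ x, f x = 2 * (2 * k * (A + B)) := by
      rw [mul_sum, sum_congr rfl (fun x _ => key x), sum_add_distrib, ← sum_mul, ← sum_mul,
        hs, hs2]; ring
    linarith
  · have : 2 * ∑ x, quadraticChar F x * f x = 2 * (2 * k * (A - B)) := by
      rw [mul_sum, sum_congr rfl (fun x _ => key2 x), sum_add_distrib, ← sum_mul, ← sum_mul,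
        hs, hs2]; ring
    linarith

/-- `∑ η(c) η(c+d) = -1` -/
lemma sum_chi_shift {k : ℕ} (hc : Fintype.card F = 4 * k + 1) {d : F} (hd : d ≠ 0) :
    ∑ c, quadraticChar F c * quadraticChar F (c + d) = -1 := by
  have hs := quadraticChar_sum_zero (F := F) (ringChar_ne hc)
  rw [← Finset.add_sum_erase _ _ (mem_univ (1 : F))] at hs
  rw [← Finset.add_sum_erase _ _ (mem_univ (0 : F))]
  simp only [quadraticChar_zero, zero_mul, zero_add, map_one] at hs ⊢
  rw [show (-1 : ℤ) = ∑ x ∈ univ.erase (1 : F), quadraticChar F x by linarith]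
  apply Finset.sum_bij' (fun c _ => 1 + d / c) (fun u _ => d / (u - 1))
  · intro a ha
    simp at ha ⊢
    exact ⟨hd, ha⟩
  · intro a ha
    simp at ha ⊢
    exact ⟨hd, sub_ne_zero.2 ha⟩
  · intro a ha
    simp at ha
    field_simp
    simp [hd]
  · intro a ha
    have : a - 1 ≠ 0 := sub_ne_zero.2 (by simpa using ha)
    field_simp
    ring
  · intro a ha
    simp at ha
    rw [show a + d = a * (1 + d / a) by field_simp, map_mul, ← mul_assoc, chi_mul_self ha, one_mul]

lemma sum_sq {k : ℕ} (hc : Fintype.card F = 4 * k + 1) (g : F → ℤ) :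
    ∑ x, g (x ^ 2) = ∑ u, (quadraticChar F u + 1) * g u := by
  rw [← Finset.sum_fiberwise (s := univ) (g := fun x : F => x ^ 2)]
  apply sum_congr rfl
  intro u _
  rw [← quadraticChar_card_sqrts (ringChar_ne hc) u,
    sum_congr rfl (g := fun _ => g u) (by intro x hx; rw [(mem_filter.1 hx).2])]
  simp

/-- the Jacobsthal sum -/
def jac (F : Type*) [Field F] [Fintype F] [DecidableEq F] (c : F) : ℤ :=
  ∑ x : F, quadraticChar F x * quadraticChar F (x ^ 2 + c)

lemma jac_scale (c : F) {d : F} (hd : d ≠ 0) :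
    jac F (c * d ^ 2) = quadraticChar F d * jac F c := by
  unfold jac
  rw [mul_sum, ← Equiv.sum_comp (Equiv.mulLeft₀ d hd)]
  apply sum_congr rfl
  intro x _
  change quadraticChar F (d * x) * quadraticChar F ((d * x) ^ 2 + c * d ^ 2) = _
  rw [show (d * x) ^ 2 + c * d ^ 2 = d ^ 2 * (x ^ 2 + c) by ring, map_mul, map_mul,
    quadraticChar_sq_one' hd]
  ring

lemma jac_norm {k : ℕ} (hk : Odd k) (hc : Fintype.card F = 4 * k + 1) {α : F}
    (hα : IsPrimitiveElt α) : jac F 1 ^ 2 + jac F α ^ 2 = 4 * (4 * k + 1) := by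
  have hk0 : 0 < k := hk.pos
  have hs := quadraticChar_sum_zero (F := F) (ringChar_ne hc)
  have h2 : (2 : F) ≠ 0 := Ring.two_ne_zero (ringChar_ne hc)
  have hsq : ∀ x : F, quadraticChar F x = 1 → ∃ d ≠ 0, x = d ^ 2 := by
    intro x hx
    have hx0 : x ≠ 0 := by rintro rfl; simp at hx
    obtain ⟨d, hd⟩ := (quadraticChar_one_iff_isSquare hx0).1 hx
    exact ⟨d, by rintro rfl; simp at hd; exact hx0 hd, by rw [hd, sq]⟩
  have h := (sum_class hc (fun c => jac F c ^ 2) (jac F 1 ^ 2) (jac F α ^ 2) ?_ ?_ ?_).1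
  · have hin : ∀ x y : F, ∑ c : F, quadraticChar F (x ^ 2 + c) * quadraticChar F (y ^ 2 + c)
        = -1 + (if x ^ 2 = y ^ 2 then (4 * k + 1 : ℤ) else 0) := by
      intro x y
      rw [← Equiv.sum_comp (Equiv.subRight (x ^ 2))]
      simp only [Equiv.subRight_apply, add_sub_cancel]
      split_ifs with hxy
      · simp only [← hxy, add_sub_cancel]
        have := (sum_class hc (fun x => quadraticChar F x * quadraticChar F x) 1 1
          (by simp) (by intro x h; simp [h]) (by intro x h; simp [h])).1
        rw [this]; ring
      · have := sum_chi_shift hc (d := y ^ 2 - x ^ 2) (sub_ne_zero.2 (Ne.symm hxy))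
        rw [add_zero, ← this]
        apply sum_congr rfl; intro c _; congr 2; ring
    have hL : ∑ c, jac F c ^ 2 = 2 * (4 * k + 1) * (4 * k) := by
      calc ∑ c, jac F c ^ 2 = ∑ c, ∑ x, ∑ y, (quadraticChar F x * quadraticChar F y) *
            (quadraticChar F (x ^ 2 + c) * quadraticChar F (y ^ 2 + c)) := by
              apply sum_congr rfl; intro c _
              unfold jac
              rw [sq, sum_mul_sum]
              apply sum_congr rfl; intro x _
              apply sum_congr rfl; intro y _
              ring
        _ = ∑ x, ∑ y, (quadraticChar F x * quadraticChar F y) *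
            (-1 + (if x ^ 2 = y ^ 2 then (4 * k + 1 : ℤ) else 0)) := by
              rw [sum_comm]
              apply sum_congr rfl; intro x _
              rw [sum_comm]
              apply sum_congr rfl; intro y _
              rw [← mul_sum, hin]
        _ = ∑ x, quadraticChar F x * quadraticChar F x * (2 * (4 * k + 1)) := by
              apply sum_congr rfl; intro x _
              simp only [mul_add, mul_neg_one, sum_add_distrib, sum_neg_distrib]
              rw [← mul_sum, hs]
              by_cases hx : x = 0
              · simp [hx]
              have hxn : x ≠ -x := by
                intro h
                have : 2 * x = 0 := by linear_combination h
                simp [h2, hx] at this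
              have : (univ.filter (fun y : F => x ^ 2 = y ^ 2)) = {x, -x} := by
                ext y
                simp only [mem_filter, mem_univ, true_and, mem_insert, mem_singleton]
                rw [sq_eq_sq_iff_eq_or_eq_neg]
                constructor
                · rintro (h | h)
                  · exact Or.inl h.symm
                  · right; rw [h, neg_neg]
                · rintro (h | h)
                  · exact Or.inl h.symm
                  · right; rw [h, neg_neg]
              simp only [mul_ite, mul_zero]
              rw [← sum_filter, this, sum_pair hxn, show -x = (-1) * x by ring, map_mul,
                chi_neg_one hc]
              ring
        _ = _ := by
              have := (sum_class hc (fun x => quadraticChar F x * quadraticChar F x) 1 1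
                (by simp) (by intro x h; simp [h]) (by intro x h; simp [h])).1
              rw [← sum_mul, this]; ring
    rw [hL] at h
    have hk1 : (2 * k : ℤ) ≠ 0 := by positivity
    apply mul_left_cancel₀ hk1
    linarith
  · simp only [jac, add_zero]
    have : ∀ x : F, quadraticChar F x * quadraticChar F (x ^ 2) = quadraticChar F x := by
      intro x
      by_cases hx : x = 0
      · simp [hx]
      · rw [quadraticChar_sq_one' hx, mul_one]
    rw [sum_congr rfl (fun x _ => this x), hs]; rfl
  · intro x hx
    obtain ⟨d, hd, rfl⟩ := hsq x hx
    have := jac_scale (1 : F) hd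
    rw [one_mul] at this
    simp only [this, mul_pow, quadraticChar_sq_one hd, one_mul]
  · intro x hx
    have hα0 := prim_ne_zero hk hc hα
    obtain ⟨d, hd, h⟩ := hsq (x * α) (by rw [map_mul, hx, chi_prim hk hc hα]; rfl)
    have h3 : x = α * (d / α) ^ 2 := by field_simp; linear_combination h
    rw [h3]
    have hd' : d / α ≠ 0 := div_ne_zero hd hα0
    simp only [jac_scale _ hd', mul_pow, quadraticChar_sq_one hd', one_mul]

lemma sum_pow_F {n : ℕ} (hn : n ≠ 0) :
    ∑ x : F, x ^ n = if Fintype.card F - 1 ∣ n then -1 else 0 := by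
  rw [← FiniteField.sum_pow_units F n, ← Finset.add_sum_erase _ _ (mem_univ (0 : F)),
    zero_pow hn, zero_add]
  symm
  apply Finset.sum_bij (fun (u : Fˣ) _ => (u : F))
  · intro u _; simp
  · intro a _ b _ h; exact Units.ext h
  · intro x hx
    exact ⟨Units.mk0 x (by simpa using hx), mem_univ _, rfl⟩
  · intro u _; rfl

lemma jac_cast {k : ℕ} (hk : Odd k) (hc : Fintype.card F = 4 * k + 1) (c : F) :
    (jac F c : F) = -((2 * k).choose k : F) * c ^ k := by
  have hk0 : 0 < k := hk.pos
  unfold jac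
  push_cast
  simp only [chi_cast hc]
  have h1 : ∀ x : F, x ^ (2 * k) * (x ^ 2 + c) ^ (2 * k) =
      ∑ j ∈ range (2 * k + 1), x ^ (2 * k + 2 * j) * (c ^ (2 * k - j) * ((2 * k).choose j : F)) := by
    intro x
    rw [add_pow, mul_sum]
    apply sum_congr rfl; intro j _
    rw [pow_add, pow_mul x 2 j]; ring
  rw [sum_congr rfl (fun x _ => h1 x), sum_comm]
  simp only [← sum_mul]
  rw [sum_eq_single k]
  · rw [sum_pow_F (by omega), if_pos (by rw [hc]; exact ⟨1, by omega⟩),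
      show 2 * k - k = k by omega]
    ring
  · intro j hj hjk
    rw [sum_pow_F (by omega), if_neg, zero_mul]
    rw [hc]
    rintro ⟨d, hd⟩
    have hj' := mem_range.1 hj
    rw [Nat.add_sub_cancel] at hd
    have : d < 2 := by
      by_contra hcon
      have : 4 * k * 2 ≤ 4 * k * d := Nat.mul_le_mul_left _ (by omega)
      omega
    interval_cases d <;> omega
  · intro h; exact absurd (mem_range.2 (by omega)) h

lemma choose_not_dvd {p m k : ℕ} (hp : p.Prime) (hp4 : p % 4 = 1) (h : p ^ m = 4 * k + 1) :
    ¬ p ∣ (2 * k).choose k := by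
  intro hd
  have hne : (k + k).choose k ≠ 0 := (Nat.choose_pos (by omega)).ne'
  rw [two_mul] at hd
  have h1 := (hp.factorization_pos_of_dvd hne hd)
  rw [Nat.factorization_choose' hp (b := m) ?_] at h1
  · obtain ⟨i, hi⟩ := Finset.card_pos.1 h1
    simp only [mem_filter, mem_Ico] at hi
    obtain ⟨⟨hi1, him⟩, hi2⟩ := hi
    have e1 : p ^ i % 4 = 1 := by rw [Nat.pow_mod, hp4]; simp
    have e2 : p ^ (m - i) % 4 = 1 := by rw [Nat.pow_mod, hp4]; simp
    have e3 : p ^ m = p ^ i * p ^ (m - i) := by rw [← pow_add]; congr 1; omega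
    obtain ⟨a, ha⟩ : ∃ a, p ^ i = 4 * a + 1 := ⟨p ^ i / 4, by omega⟩
    obtain ⟨b, hb⟩ : ∃ b, p ^ (m - i) = 4 * b + 1 := ⟨p ^ (m - i) / 4, by omega⟩
    have hka : k = a + p ^ i * b := by
      rw [e3, hb] at h
      have : 4 * k = 4 * (p ^ i * b) + 4 * a := by
        have : p ^ i * (4 * b + 1) = 4 * (p ^ i * b) + p ^ i := by ring
        omega
      omega
    have : k % p ^ i = a := by
      rw [hka, Nat.add_mul_mod_self_left, Nat.mod_eq_of_lt (by omega)]
    rw [this] at hi2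
    omega
  · rcases Nat.eq_zero_or_pos k with h0 | h0
    · subst h0; simp at hd; exact absurd hd hp.one_lt.ne'
    · exact Nat.log_lt_of_lt_pow (by omega) (by omega)

lemma sum_range_double (h : ℕ → ℤ) (n : ℕ) (hper : ∀ i, h (n + i) = h i) :
    ∑ i ∈ range (2 * n), h i = 2 * ∑ i ∈ range n, h i := by
  rw [two_mul n, sum_range_add, sum_congr rfl (fun i _ => hper i)]; ring

lemma jac_one_mod {k : ℕ} (hk : Odd k) (hc : Fintype.card F = 4 * k + 1) {α : F}
    (hα : IsPrimitiveElt α) : ∃ z : ℤ, jac F 1 = 8 * z - 2 := by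
  have hk0 : 0 < k := hk.pos
  have hα0 := prim_ne_zero hk hc hα
  have h2k := prim_half hk hc hα
  set h : ℕ → ℤ := fun n => quadraticChar F (α ^ n) * quadraticChar F ((α ^ n) ^ 2 + 1) with hh
  have e1 : jac F 1 = ∑ n ∈ range (2 * (2 * k)), h n := by
    unfold jac
    rw [sum_nonzero hk hc hα]
    simp [hh, ← mul_assoc]
  rw [sum_range_double] at e1
  swap
  · intro i
    simp only [hh]
    rw [pow_add, h2k, map_mul, chi_neg_one hc]
    simp
  have hrefl : ∀ n ≤ 2 * k, h (2 * k - n) = h n := by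
    intro n hn
    have e : α ^ (2 * k - n) * α ^ n = -1 := by
      rw [← pow_add, ← h2k]; congr 1; omega
    have hx : α ^ n ≠ 0 := pow_ne_zero _ hα0
    have e' : α ^ (2 * k - n) = (-1) * (α ^ n)⁻¹ := by
      rw [← e]; field_simp
    simp only [hh]
    rw [e']
    generalize α ^ n = x at hx
    rw [show (-1 * x⁻¹) ^ 2 + 1 = (x⁻¹) ^ 2 * (x ^ 2 + 1) by field_simp; ring]
    rw [map_mul, chi_neg_one hc, map_mul, quadraticChar_sq_one' (inv_ne_zero hx)]
    have : quadraticChar F x⁻¹ = quadraticChar F x := by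
      rw [show x⁻¹ = (x⁻¹) ^ 2 * x by field_simp, map_mul, quadraticChar_sq_one' (inv_ne_zero hx),
        one_mul]
    rw [this]; ring
  have h0 : h 0 = -1 := by
    simp only [hh]
    norm_num
    exact chi_two hk hc
  have hkk : h k = 0 := by
    simp only [hh]
    rw [← pow_mul, mul_comm k 2, h2k]; simp
  have hodd : ∀ n, n < k → n ≠ 0 → ∃ z, h n = 2 * z + 1 := by
    intro n hn hn0
    have hx : α ^ n ≠ 0 := pow_ne_zero _ hα0
    have hy : (α ^ n) ^ 2 + 1 ≠ 0 := by
      intro h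
      have : α ^ (n * 2) = α ^ (2 * k) := by
        rw [h2k, pow_mul]; linear_combination h
      have := prim_inj hk hc hα (by omega) (by omega) this
      omega
    simp only [hh]
    rcases quadraticChar_dichotomy hx with h1 | h1 <;>
    rcases quadraticChar_dichotomy hy with h2 | h2 <;> rw [h1, h2]
    exacts [⟨0, rfl⟩, ⟨-1, rfl⟩, ⟨-1, rfl⟩, ⟨0, rfl⟩]
  obtain ⟨j, rfl⟩ := hk
  -- split the sum
  have s1 : ∑ n ∈ range (2 * (2 * j + 1)), h n = h 0 + ∑ n ∈ range (2 * j), h (n + 1)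
      + (h (2 * j + 1) + ∑ n ∈ range (2 * j), h (2 * j + 1 + (n + 1))) := by
    rw [two_mul (2 * j + 1), sum_range_add, sum_range_succ', sum_range_succ' _ (2 * j)]
    simp only [add_zero]
    ring
  have s2 : ∑ n ∈ range (2 * j), h (2 * j + 1 + (n + 1)) = ∑ n ∈ range (2 * j), h (n + 1) := by
    rw [← sum_range_reflect]
    apply sum_congr rfl
    intro n hn
    have := mem_range.1 hn
    rw [← hrefl (n + 1) (by omega)]
    congr 1; omega
  have s3 : ∃ z, ∑ n ∈ range (2 * j), h (n + 1) = 2 * z := by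
    have : ∀ n, ∃ z, n < 2 * j → h (n + 1) = 2 * z + 1 := by
      intro n
      by_cases hn : n < 2 * j
      · obtain ⟨z, hz⟩ := hodd (n + 1) (by omega) (by omega)
        exact ⟨z, fun _ => hz⟩
      · exact ⟨0, fun h => absurd h hn⟩
    choose z hz using this
    refine ⟨∑ n ∈ range (2 * j), z n + j, ?_⟩
    rw [sum_congr rfl (fun n hn => hz n (mem_range.1 hn)), sum_add_distrib, ← mul_sum]
    simp; ring
  obtain ⟨z, hz⟩ := s3
  rw [s1, s2, hz, h0, hkk] at e1
  exact ⟨z, by rw [e1]; ring⟩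

/-- the arithmetic endgame -/
lemma arith {p m : ℕ} (hp : p.Prime) {q s t A B : ℤ} (hq : q = p ^ m)
    (hst : q = s ^ 2 + t ^ 2) (hs4 : s % 4 = 1) (hq4 : q % 4 = 1)
    (hAB : A ^ 2 + B ^ 2 = 4 * q) (hA : ∃ z, A = 8 * z - 2)
    (hd : ¬ (p : ℤ) ∣ A * t - B * s) : B = 2 * t := by
  have hpI : Prime (p : ℤ) := Nat.prime_iff_prime_int.1 hp
  have hq0 : 0 < q := by rw [hq]; exact pow_pos (by exact_mod_cast hp.pos) _
  obtain ⟨z, hz⟩ := hA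
  have h1 : q ∣ (A * t - B * s) * (A * t + B * s) :=
    ⟨A ^ 2 - 4 * s ^ 2, by linear_combination (-s^2) * hAB - A ^ 2 * hst⟩
  have h2 : q ∣ A * t + B * s := by
    rw [hq] at h1 ⊢
    exact (IsCoprime.pow_left ((Prime.coprime_iff_not_dvd hpI).2 hd)).dvd_of_dvd_mul_left h1
  obtain ⟨u, hu⟩ := h2
  have hnorm : (A * s - B * t) ^ 2 = q ^ 2 * (4 - u ^ 2) := by
    have : (A * s - B * t) ^ 2 + (A * t + B * s) ^ 2 = 4 * q * q := by
      linear_combination q * hAB - (A ^ 2 + B ^ 2) * hst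
    rw [hu] at this
    linear_combination this
  have hBe : ∃ b, B = 2 * b := by
    have : Even (B ^ 2) := ⟨2 * q - 2 * (4 * z - 1) ^ 2, by rw [hz] at hAB; linear_combination hAB⟩
    obtain ⟨b, hb⟩ := (Int.even_pow.1 this).1
    exact ⟨b, by omega⟩
  obtain ⟨b, hb⟩ := hBe
  obtain ⟨σ, hσ⟩ : ∃ σ, s = 4 * σ + 1 := ⟨s / 4, by omega⟩
  have hte : ∃ τ, t = 2 * τ := by
    have : Even (t ^ 2) := by
      obtain ⟨r, hr⟩ : ∃ r, q = 4 * r + 1 := ⟨q / 4, by omega⟩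
      exact ⟨2 * r - 8 * σ ^ 2 - 4 * σ, by rw [hr, hσ] at hst; linear_combination -hst⟩
    obtain ⟨b, hb⟩ := (Int.even_pow.1 this).1
    exact ⟨b, by omega⟩
  obtain ⟨τ, hτ⟩ := hte
  obtain ⟨r, hr⟩ : ∃ r, q = 4 * r + 1 := ⟨q / 4, by omega⟩
  have hu2 : u ^ 2 ≤ 4 := by
    by_contra hcon
    push Not at hcon
    have : q ^ 2 * (4 - u ^ 2) < 0 := mul_neg_of_pos_of_neg (by positivity) (by linarith)
    have := sq_nonneg (A * s - B * t)
    linarith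
  have hul : -2 ≤ u := by nlinarith
  have hur : u ≤ 2 := by nlinarith
  have hueven : ∃ v, u = 2 * v := by
    refine ⟨(4 * z - 1) * t + b * s - 2 * r * u, ?_⟩
    rw [hz, hb, hr] at hu
    linear_combination -hu
  obtain ⟨v, hv⟩ := hueven
  have hmod : ∃ w, A * s - B * t = 4 * w + 2 :=
    ⟨8 * z * σ + 2 * z - 2 * σ - b * τ - 1, by rw [hz, hb, hσ, hτ]; ring⟩
  obtain ⟨w, hw⟩ := hmod
  have hv3 : v = 0 := by
    have : v = -1 ∨ v = 0 ∨ v = 1 := by omega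
    rcases this with h | h | h
    · exfalso
      rw [hv, h, hw] at hnorm
      have : (4 * w + 2) ^ 2 = 0 := by rw [hnorm]; ring
      have := pow_eq_zero_iff (two_ne_zero) |>.1 this
      omega
    · exact h
    · exfalso
      rw [hv, h, hw] at hnorm
      have : (4 * w + 2) ^ 2 = 0 := by rw [hnorm]; ring
      have := pow_eq_zero_iff (two_ne_zero) |>.1 this
      omega
  have hu0 : u = 0 := by omega
  rw [hu0] at hu hnorm
  have hc : A * s - B * t = 2 * q ∨ A * s - B * t = -(2 * q) := by
    apply sq_eq_sq_iff_eq_or_eq_neg.1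
    rw [hnorm]; ring
  have hAs : A = 2 * s ∨ A = -(2 * s) := by
    rcases hc with h | h
    · left
      apply mul_left_cancel₀ hq0.ne'
      nth_rewrite 1 [hst]
      linear_combination s * h + t * hu
    · right
      apply mul_left_cancel₀ hq0.ne'
      nth_rewrite 1 [hst]
      linear_combination s * h + t * hu
  have hA2 : A = -(2 * s) := by
    rcases hAs with h | h
    · exfalso; omega
    · exact h
  have hs0 : s ≠ 0 := by omega
  apply mul_left_cancel₀ hs0
  rw [hA2] at hu
  linear_combination hu

lemma jac_alpha {k p m : ℕ} (hk : Odd k) (hc : Fintype.card F = 4 * k + 1) {α : F}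
    (hα : IsPrimitiveElt α) (hp : p.Prime) (hpm : p ^ m = 4 * k + 1)
    {s t : ℤ} (hst : (4 * k + 1 : ℤ) = s ^ 2 + t ^ 2)
    (hps : ¬((p : ℤ) ∣ s)) (hs4 : s % 4 = 1)
    (ht : (t : F) * α ^ k = (s : F)) : jac F α = 2 * t := by
  have hk0 : 0 < k := hk.pos
  have : Fact p.Prime := ⟨hp⟩
  have hm : m ≠ 0 := by rintro rfl; simp at hpm; omega
  have hchar : CharP F p := by
    obtain ⟨n, hn, hcard⟩ := FiniteField.card F (ringChar F)
    have hdvd : p ∣ (ringChar F) ^ (n : ℕ) := by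
      rw [← hcard, hc, ← hpm]; exact dvd_pow_self _ hm
    have := (Nat.prime_dvd_prime_iff_eq hp hn).1 (hp.dvd_of_dvd_pow hdvd)
    rw [this]; infer_instance
  have hp4 : p % 4 = 1 := by
    -- `-1` is a square modulo `p`, as `p ∣ s² + t²` and `p ∤ s`
    have hodd : p % 2 = 1 := by
      by_contra h
      have h2 : 2 ∣ p ^ m := dvd_pow (Nat.dvd_of_mod_eq_zero (by omega)) hm
      omega
    have hz : (s : ZMod p) ^ 2 + (t : ZMod p) ^ 2 = 0 := by
      have : ((4 * k + 1 : ℤ) : ZMod p) = 0 := by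
        rw [show (4 * k + 1 : ℤ) = (p : ℤ) ^ m by exact_mod_cast hpm.symm]
        push_cast
        simp [hm]
      rw [hst] at this
      exact_mod_cast this
    have hs0 : (s : ZMod p) ≠ 0 := by
      rwa [Ne, ZMod.intCast_zmod_eq_zero_iff_dvd]
    have : IsSquare (-1 : ZMod p) := by
      refine ⟨(t : ZMod p) / s, ?_⟩
      field_simp
      linear_combination -hz
    have := ZMod.exists_sq_eq_neg_one_iff.1 this
    omega
  have hp2 : ((2 : ℤ) : F) ≠ 0 := by
    push_cast; exact Ring.two_ne_zero (ringChar_ne hc)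
  have hI : (α ^ k) ^ 2 = -1 := by rw [← pow_mul, mul_comm k 2]; exact prim_half hk hc hα
  have hs0 : (s : F) ≠ 0 := by
    rwa [Ne, CharP.intCast_eq_zero_iff F p]
  have hch : ((2 * k).choose k : F) ≠ 0 := by
    rw [Ne, CharP.cast_eq_zero_iff F p]
    exact choose_not_dvd hp hp4 hpm
  have hα0 := prim_ne_zero hk hc hα
  refine arith hp (q := 4 * k + 1) (m := m) (s := s) (A := jac F 1) ?_ hst hs4 (by omega) ?_
    (jac_one_mod hk hc hα) ?_
  · exact_mod_cast hpm.symm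
  · exact jac_norm hk hc hα
  · rw [← CharP.intCast_eq_zero_iff F p]
    push_cast
    rw [jac_cast hk hc, jac_cast hk hc, one_pow, ← ht]
    intro h
    have h' : 2 * (((2 * k).choose k : F) * t) = 0 := by
      linear_combination -h + ((2 * k).choose k : F) * t * hI
    have ht0 : (t : F) ≠ 0 := by
      intro h0; rw [h0, zero_mul] at ht; exact hs0 ht.symm
    push_cast at hp2
    simp [hch, ht0, hp2] at h'

lemma cyc_image {k : ℕ} (hk : Odd k) (hc : Fintype.card F = 4 * k + 1) {α : F}
    (hα : IsPrimitiveElt α) {e r j : ℕ} (her : e * r = 4 * k) (hj : j < e) :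
    cycClass α e j = (range r).image (fun n => α ^ (e * n + j)) := by
  have hk0 : 0 < k := hk.pos
  have hr : 0 < r := Nat.pos_of_ne_zero (by rintro rfl; omega)
  unfold cycClass
  apply Finset.Subset.antisymm
  · intro x hx
    obtain ⟨n, -, rfl⟩ := mem_image.1 hx
    refine mem_image.2 ⟨n % r, mem_range.2 (Nat.mod_lt _ hr), ?_⟩
    have h1 : e * n + j = (e * (n % r) + j) + (4 * k) * (n / r) := by
      rw [← her]
      conv_lhs => rw [← Nat.mod_add_div n r]
      ring
    rw [h1, pow_add _ _ (4 * k * (n / r)), pow_mul, prim_pow hk hc hα, one_pow, mul_one]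
  · apply image_subset_image
    intro n hn
    have h1 := mem_range.1 hn
    have : 1 * r ≤ e * r := Nat.mul_le_mul_right _ (by omega)
    exact mem_range.2 (by omega)

lemma cyc_inj {k : ℕ} (hk : Odd k) (hc : Fintype.card F = 4 * k + 1) {α : F}
    (hα : IsPrimitiveElt α) {e r j : ℕ} (her : e * r = 4 * k) (hj : j < e) :
    Set.InjOn (fun n => α ^ (e * n + j)) (range r : Finset ℕ) := by
  intro a ha b hb h
  have ha' : a < r := by simpa using ha
  have hb' : b < r := by simpa using hb
  have h1 : e * (a + 1) ≤ e * r := Nat.mul_le_mul_left _ ha'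
  have h2 : e * (b + 1) ≤ e * r := Nat.mul_le_mul_left _ hb'
  rw [mul_add] at h1 h2
  have := prim_inj hk hc hα (by omega) (by omega) h
  exact Nat.eq_of_mul_eq_mul_left (show 0 < e by omega) (by omega)

lemma cyc_card {k : ℕ} (hk : Odd k) (hc : Fintype.card F = 4 * k + 1) {α : F}
    (hα : IsPrimitiveElt α) {e r j : ℕ} (her : e * r = 4 * k) (hj : j < e) :
    (cycClass α e j).card = r := by
  rw [cyc_image hk hc hα her hj, card_image_of_injOn (cyc_inj hk hc hα her hj), card_range]

lemma cyc_mem {k : ℕ} (hk : Odd k) (hc : Fintype.card F = 4 * k + 1) {α : F}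
    (hα : IsPrimitiveElt α) {e r j : ℕ} (her : e * r = 4 * k) (hj : j < e) (x : F) :
    x ∈ cycClass α e j ↔ x ^ r = α ^ (j * r) := by
  have hk0 : 0 < k := hk.pos
  have hr : 0 < r := Nat.pos_of_ne_zero (by rintro rfl; omega)
  have hα0 := prim_ne_zero hk hc hα
  constructor
  · intro hx
    rw [cyc_image hk hc hα her hj] at hx
    obtain ⟨n, -, rfl⟩ := mem_image.1 hx
    rw [← pow_mul, show (e * n + j) * r = (e * r) * n + j * r by ring, her, pow_add, pow_mul,
      prim_pow hk hc hα, one_pow, one_mul]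
  · intro h
    have hx : x ≠ 0 := by
      rintro rfl
      rw [zero_pow hr.ne'] at h
      exact pow_ne_zero _ hα0 h.symm
    obtain ⟨n, hn, rfl⟩ := prim_exists_lt hk hc hα hx
    rw [← pow_mul] at h
    have h : n * r ≡ j * r [MOD e * r] := by
      rw [her]
      apply prim_inj hk hc hα (Nat.mod_lt _ (by omega)) (Nat.mod_lt _ (by omega))
      rw [← prim_order hk hc hα, pow_mod_orderOf, pow_mod_orderOf]
      exact h
    have h' : n % e = j := by
      have := Nat.ModEq.mul_right_cancel' hr.ne' h
      rw [Nat.ModEq, Nat.mod_eq_of_lt hj] at this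
      exact this
    rw [cyc_image hk hc hα her hj]
    refine mem_image.2 ⟨n / e, mem_range.2 ?_, ?_⟩
    · exact Nat.div_lt_of_lt_mul (by omega)
    · rw [← h', Nat.div_add_mod]

lemma S_eq {k : ℕ} (hk : Odd k) (hc : Fintype.card F = 4 * k + 1) {α : F}
    (hα : IsPrimitiveElt α) :
    4 * ∑ y ∈ cycClass α 4 3, quadraticChar F (1 - y) = jac F α := by
  have hk0 : 0 < k := hk.pos
  have hα0 := prim_ne_zero hk hc hα
  have hI : (α ^ k) ^ 2 = -1 := by rw [← pow_mul, mul_comm k 2]; exact prim_half hk hc hα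
  rw [cyc_image hk hc hα (r := k) rfl (by norm_num), sum_image (cyc_inj hk hc hα rfl (by norm_num))]
  -- sum over all `z` of `η (1 - α^3 z^4)`
  have h1 : ∑ z : F, quadraticChar F (1 - α ^ 3 * (z ^ 2) ^ 2) =
      1 + 4 * ∑ n ∈ range k, quadraticChar F (1 - α ^ (4 * n + 3)) := by
    rw [sum_nonzero hk hc hα]
    congr 1
    · simp
    · have e : ∀ n, quadraticChar F (1 - α ^ 3 * ((α ^ n) ^ 2) ^ 2) =
        quadraticChar F (1 - α ^ (4 * n + 3)) := by
        intro n; congr 2; ring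
      have hp : ∀ i, quadraticChar F (1 - α ^ (4 * (k + i) + 3)) =
          quadraticChar F (1 - α ^ (4 * i + 3)) := by
        intro i
        rw [show 4 * (k + i) + 3 = 4 * k + (4 * i + 3) by ring, pow_add, prim_pow hk hc hα,
          one_mul]
      have hp2 : ∀ i, quadraticChar F (1 - α ^ (4 * (2 * k + i) + 3)) =
          quadraticChar F (1 - α ^ (4 * i + 3)) := by
        intro i
        rw [show 2 * k + i = k + (k + i) by ring, hp, hp]
      rw [sum_congr rfl (fun n _ => e n), show 4 * k = 2 * (2 * k) by ring,
        sum_range_double _ _ hp2, sum_range_double _ _ hp]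
      ring
  have h2 : ∑ u : F, quadraticChar F (1 - α ^ 3 * u ^ 2) = 1 := by
    rw [sum_sq hc (fun u => quadraticChar F (1 - α ^ 3 * u))]
    simp only [add_mul, one_mul, sum_add_distrib]
    have a1 : ∑ u : F, quadraticChar F (1 - α ^ 3 * u) = 0 := by
      rw [← quadraticChar_sum_zero (F := F) (ringChar_ne hc)]
      apply Finset.sum_bijective (fun u => 1 - α ^ 3 * u)
      · rw [Fintype.bijective_iff_injective_and_card]
        refine ⟨fun a b h => ?_, rfl⟩
        have h' : α ^ 3 * a = α ^ 3 * b := by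
          have : 1 - α ^ 3 * a = 1 - α ^ 3 * b := h
          linear_combination -this
        exact mul_left_cancel₀ (pow_ne_zero _ hα0) h'
      · simp
      · simp
    have a2 : ∑ u : F, quadraticChar F u * quadraticChar F (1 - α ^ 3 * u) = 1 := by
      have hd : -(α ^ 3)⁻¹ ≠ 0 := neg_ne_zero.2 (inv_ne_zero (pow_ne_zero _ hα0))
      have := sum_chi_shift hc hd
      rw [show (1 : ℤ) = -(-1) by norm_num, ← this, ← sum_neg_distrib]
      apply sum_congr rfl; intro u _
      rw [show 1 - α ^ 3 * u = (-1) * (α ^ 3) * (u + -(α ^ 3)⁻¹) by field_simp; ring, map_mul,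
        map_mul, chi_neg_one hc, map_pow, chi_prim hk hc hα]
      ring
    rw [a1, a2]; norm_num
  have h3 : ∑ u : F, quadraticChar F u * quadraticChar F (1 - α ^ 3 * u ^ 2) = jac F α := by
    have hd : (α ^ 2)⁻¹ * α ^ k ≠ 0 :=
      mul_ne_zero (inv_ne_zero (pow_ne_zero _ hα0)) (pow_ne_zero _ hα0)
    unfold jac
    rw [← Equiv.sum_comp (Equiv.mulLeft₀ _ hd)]
    apply sum_congr rfl; intro v _
    change quadraticChar F ((α ^ 2)⁻¹ * α ^ k * v) *
      quadraticChar F (1 - α ^ 3 * ((α ^ 2)⁻¹ * α ^ k * v) ^ 2) = _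
    have e1 : 1 - α ^ 3 * ((α ^ 2)⁻¹ * α ^ k * v) ^ 2 = (α⁻¹) ^ 2 * α * (v ^ 2 + α) := by
      rw [mul_pow, mul_pow, hI]; field_simp; ring
    rw [e1, map_mul, map_mul, map_mul, map_mul, chi_I hk hc hα,
      quadraticChar_sq_one' (inv_ne_zero hα0), chi_prim hk hc hα, ← inv_pow,
      quadraticChar_sq_one' (inv_ne_zero hα0)]
    ring
  have h4 : ∑ z : F, quadraticChar F (1 - α ^ 3 * (z ^ 2) ^ 2) = jac F α + 1 := by
    rw [sum_sq hc (fun u => quadraticChar F (1 - α ^ 3 * u ^ 2))]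
    simp only [add_mul, one_mul, sum_add_distrib]
    rw [h3, h2]
  linarith

lemma count_ext (D E : Finset F) (w : F) :
    (extDiff D E).count w = ((D ×ˢ E).filter (fun p => w = p.1 - p.2)).card := by
  unfold extDiff
  rw [Multiset.count_map]; rfl

lemma count_int (D : Finset F) (w : F) :
    (intDiff D).count w =
      ((D ×ˢ D).filter (fun p => p.1 ≠ p.2 ∧ w = p.1 - p.2)).card := by
  unfold intDiff
  rw [Multiset.count_map, ← Finset.filter_filter]; rfl

lemma ext_scale {D E D' E' : Finset F} {c : F} (hc : c ≠ 0) (hD : ∀ x, c * x ∈ D' ↔ x ∈ D)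
    (hE : ∀ x, c * x ∈ E' ↔ x ∈ E) (w : F) :
    (extDiff D' E').count (c * w) = (extDiff D E).count w := by
  rw [count_ext, count_ext]
  symm
  apply Finset.card_bij (fun p _ => (c * p.1, c * p.2))
  · rintro ⟨x, y⟩ h
    simp only [mem_filter, mem_product] at h ⊢
    exact ⟨⟨(hD _).2 h.1.1, (hE _).2 h.1.2⟩, by rw [h.2]; ring⟩
  · rintro ⟨x, y⟩ _ ⟨x', y'⟩ _ h
    simpa [hc] using h
  · rintro ⟨x, y⟩ h
    simp only [mem_filter, mem_product] at h
    have ex : c * (c⁻¹ * x) = x := by field_simp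
    have ey : c * (c⁻¹ * y) = y := by field_simp
    refine ⟨(c⁻¹ * x, c⁻¹ * y), ?_, by rw [ex, ey]⟩
    simp only [mem_filter, mem_product]
    refine ⟨⟨(hD _).1 (by rw [ex]; exact h.1.1), (hE _).1 (by rw [ey]; exact h.1.2)⟩, ?_⟩
    apply mul_left_cancel₀ hc
    rw [mul_sub, ex, ey]; exact h.2

lemma ext_neg (D E : Finset F) (w : F) :
    (extDiff E D).count (-w) = (extDiff D E).count w := by
  rw [count_ext, count_ext]
  refine Finset.card_bij' (fun p _ => (p.2, p.1)) (fun p _ => (p.2, p.1)) ?_ ?_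
    (fun _ _ => rfl) (fun _ _ => rfl)
  · rintro ⟨x, y⟩ h
    simp only [mem_filter, mem_product] at h ⊢
    exact ⟨h.1.symm, by linear_combination -h.2⟩
  · rintro ⟨x, y⟩ h
    simp only [mem_filter, mem_product] at h ⊢
    exact ⟨h.1.symm, by linear_combination -h.2⟩

lemma int_zero (D : Finset F) : (intDiff D).count 0 = 0 := by
  rw [count_int, card_eq_zero, filter_eq_empty_iff]
  rintro ⟨x, y⟩ _ ⟨h1, h2⟩
  exact h1 (sub_eq_zero.1 h2.symm)

lemma int_eq_ext (D : Finset F) {w : F} (hw : w ≠ 0) :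
    (intDiff D).count w = (extDiff D D).count w := by
  rw [count_int, count_ext]
  congr 1
  apply filter_congr
  rintro ⟨x, y⟩ _
  constructor
  · exact fun h => h.2
  · intro h
    refine ⟨?_, h⟩
    rintro hxy
    apply hw
    rw [h, hxy, sub_self]

lemma int_card (D : Finset F) : Multiset.card (intDiff D) + D.card = D.card * D.card := by
  unfold intDiff
  rw [Multiset.card_map]
  change ((D ×ˢ D).filter (fun p => p.1 ≠ p.2)).card + _ = _
  have : (D ×ˢ D).filter (fun p => p.1 ≠ p.2) = D.offDiag := by
    ext ⟨x, y⟩; simp [and_assoc]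
  rw [this, offDiag_card]
  have : D.card ≤ D.card * D.card := Nat.le_mul_self _
  omega

lemma sum_count (M : Multiset F) : ∑ w, (M.count w : ℤ) = Multiset.card M := by
  exact_mod_cast Multiset.sum_count_eq_card (s := univ) (m := M) (fun a _ => mem_univ a)

lemma sum_chi_ext (D E : Finset F) :
    ∑ w, quadraticChar F w * ((extDiff D E).count w : ℤ) =
      ∑ x ∈ D, ∑ y ∈ E, quadraticChar F (x - y) := by
  rw [← sum_product', ← Finset.sum_fiberwise (s := D ×ˢ E) (g := fun p => p.1 - p.2)]
  apply sum_congr rfl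
  intro w _
  rw [sum_congr rfl (g := fun _ => quadraticChar F w)
    (by intro x hx; rw [(mem_filter.1 hx).2]), count_ext, sum_const]
  simp only [eq_comm (a := w)]
  rw [nsmul_eq_mul]; ring

lemma mem_sq_class {k : ℕ} (hk : Odd k) (hc : Fintype.card F = 4 * k + 1) {α : F}
    (hα : IsPrimitiveElt α) (x : F) : x ∈ cycClass α 2 0 ↔ quadraticChar F x = 1 := by
  have hk0 : 0 < k := hk.pos
  rw [cyc_mem hk hc hα (r := 2 * k) (by ring) (by norm_num), zero_mul, pow_zero, ← chi_cast hc]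
  constructor
  · intro h
    have hx : x ≠ 0 := by rintro rfl; simp at h
    rcases quadraticChar_dichotomy hx with h1 | h1
    · exact h1
    · rw [h1] at h; push_cast at h
      exact absurd h (Ring.neg_one_ne_one_of_char_ne_two (ringChar_ne hc))
  · intro h; rw [h]; simp

lemma quartic_of_sq {k : ℕ} (hk : Odd k) (hc : Fintype.card F = 4 * k + 1) {c : F}
    (h : quadraticChar F c = 1) : c ^ k = 1 ∨ (-c) ^ k = 1 := by
  have h1 := chi_cast hc c
  rw [h, mul_comm, pow_mul, sq] at h1
  push_cast at h1
  rcases mul_self_eq_one_iff.1 h1.symm with h | h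
  · exact Or.inl h
  · right; rw [hk.neg_pow, h, neg_neg]

lemma scale_mem {k : ℕ} (hk : Odd k) (hc : Fintype.card F = 4 * k + 1) {α : F}
    (hα : IsPrimitiveElt α) {j : ℕ} (hj : j < 4) {c : F} (h : c ^ k = 1) (x : F) :
    c * x ∈ cycClass α 4 j ↔ x ∈ cycClass α 4 j := by
  rw [cyc_mem hk hc hα (r := k) rfl hj, cyc_mem hk hc hα (r := k) rfl hj, mul_pow, h, one_mul]

lemma ne_zero_of_pow {k : ℕ} (hk : Odd k) {c : F} (h : c ^ k = 1) : c ≠ 0 := by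
  rintro rfl
  rw [zero_pow hk.pos.ne'] at h
  exact zero_ne_one h

lemma count_target {k : ℕ} (hk : Odd k) (hc : Fintype.card F = 4 * k + 1) {α : F}
    (hα : IsPrimitiveElt α) (M : Multiset F) (A B : ℕ) (h0 : M.count 0 = 0)
    (h1 : ∀ x, quadraticChar F x = 1 → M.count x = A)
    (h2 : ∀ x, quadraticChar F x = -1 → M.count x = B) :
    M = A • (cycClass α 2 0).val + B • (Gstar F \ cycClass α 2 0).val := by
  ext w
  rw [Multiset.count_add, Multiset.count_nsmul, Multiset.count_nsmul,
    Multiset.count_eq_of_nodup (Finset.nodup _), Multiset.count_eq_of_nodup (Finset.nodup _)]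
  simp only [Finset.mem_val, mem_sdiff, Gstar, mem_erase, mem_univ, and_true,
    mem_sq_class hk hc hα]
  by_cases hw : w = 0
  · subst hw; simp [h0]
  · rcases quadraticChar_dichotomy hw with h | h
    · rw [h1 w h]; simp [h]
    · rw [h2 w h]; simp [h, hw]

lemma ext_counts {k : ℕ} (hk : Odd k) (hc : Fintype.card F = 4 * k + 1) {α : F}
    (hα : IsPrimitiveElt α) (M : Multiset F)
    (hM : M = extDiff (cycClass α 4 0) (cycClass α 4 3)
      + extDiff (cycClass α 4 3) (cycClass α 4 0))
    (hdisj : Disjoint (cycClass α 4 0) (cycClass α 4 3)) :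
    ∃ A B : ℕ, (A + B : ℤ) = k ∧ 4 * (A - B : ℤ) = jac F α ∧
      M = A • (cycClass α 2 0).val + B • (Gstar F \ cycClass α 2 0).val := by
  have hk0 : 0 < k := hk.pos
  have hα0 := prim_ne_zero hk hc hα
  have hcount : ∀ w, M.count w = (extDiff (cycClass α 4 0) (cycClass α 4 3)).count w
      + (extDiff (cycClass α 4 3) (cycClass α 4 0)).count w := by
    intro w; rw [hM, Multiset.count_add]
  have hinv4 : ∀ c, c ^ k = 1 → ∀ w, M.count (c * w) = M.count w := by
    intro c hck w
    have c0 := ne_zero_of_pow hk hck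
    have m0 := scale_mem hk hc hα (j := 0) (by norm_num) hck
    have m3 := scale_mem hk hc hα (j := 3) (by norm_num) hck
    rw [hcount, hcount, ext_scale c0 m0 m3, ext_scale c0 m3 m0]
  have hneg : ∀ w, M.count (-w) = M.count w := by
    intro w
    rw [hcount, hcount, ext_neg, ext_neg, add_comm]
  have hinv : ∀ c, quadraticChar F c = 1 → ∀ w, M.count (c * w) = M.count w := by
    intro c h w
    rcases quartic_of_sq hk hc h with h | h
    · exact hinv4 c h w
    · rw [← hneg, ← neg_mul]; exact hinv4 _ h w
  have h0 : M.count 0 = 0 := by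
    have hz : ∀ D E : Finset F, Disjoint D E → (extDiff D E).count 0 = 0 := by
      intro D E h
      rw [count_ext, card_eq_zero, filter_eq_empty_iff]
      rintro ⟨x, y⟩ hxy h0
      simp only [mem_product] at hxy
      have : x = y := sub_eq_zero.1 h0.symm
      exact Finset.disjoint_left.1 h hxy.1 (this ▸ hxy.2)
    rw [hcount, hz _ _ hdisj, hz _ _ hdisj.symm]
  have h1 : ∀ x, quadraticChar F x = 1 → M.count x = M.count 1 := by
    intro x hx
    have := hinv x hx 1
    rwa [mul_one] at this
  have h2 : ∀ x, quadraticChar F x = -1 → M.count x = M.count α := by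
    intro x hx
    have := hinv (x * α⁻¹) (by
      have h3 : quadraticChar F (α⁻¹) * quadraticChar F α = 1 := by
        rw [← map_mul, inv_mul_cancel₀ hα0, map_one]
      rw [chi_prim hk hc hα] at h3
      rw [map_mul, hx]; linarith) α
    rwa [inv_mul_cancel_right₀ hα0] at this
  have hsum := sum_class hc (fun w => (M.count w : ℤ)) (M.count 1) (M.count α)
    (by simp [h0]) (fun x hx => by simp [h1 x hx]) (fun x hx => by simp [h2 x hx])
  have hk1 : (2 * k : ℤ) ≠ 0 := by positivity
  have c0 := cyc_card hk hc hα (r := k) (e := 4) (j := 0) rfl (by norm_num)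
  have c3 := cyc_card hk hc hα (r := k) (e := 4) (j := 3) rfl (by norm_num)
  refine ⟨M.count 1, M.count α, ?_, ?_, count_target hk hc hα M _ _ h0 h1 h2⟩
  · have := hsum.1
    simp only [sum_count] at this
    rw [hM] at this
    simp only [extDiff, Multiset.card_add, Multiset.card_map, Finset.card_val, card_product,
      c0, c3] at this
    rw [← extDiff, ← extDiff, ← hM] at this
    apply mul_left_cancel₀ hk1
    rw [← this]; push_cast; ring
  · have hs := hsum.2
    have hS := S_eq hk hc hα
    have e1 : ∑ x, quadraticChar F x * (M.count x : ℤ) =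
        2 * (k * ∑ y ∈ cycClass α 4 3, quadraticChar F (1 - y)) := by
      have : ∀ x, quadraticChar F x * (M.count x : ℤ) =
        quadraticChar F x * ((extDiff (cycClass α 4 0) (cycClass α 4 3)).count x : ℤ) +
        quadraticChar F x * ((extDiff (cycClass α 4 3) (cycClass α 4 0)).count x : ℤ) := by
        intro x; rw [hcount]; push_cast; ring
      rw [sum_congr rfl (fun x _ => this x), sum_add_distrib, sum_chi_ext, sum_chi_ext]
      rw [sum_comm (s := cycClass α 4 3)]
      have hsym : ∀ x y : F, quadraticChar F (y - x) = quadraticChar F (x - y) := by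
        intro x y
        rw [show y - x = (-1) * (x - y) by ring, map_mul, chi_neg_one hc, one_mul]
      have hrow : ∀ x ∈ cycClass α 4 0, ∑ y ∈ cycClass α 4 3, quadraticChar F (x - y) =
          ∑ y ∈ cycClass α 4 3, quadraticChar F (1 - y) := by
        intro x hx
        rw [cyc_mem hk hc hα (r := k) rfl (by norm_num), zero_mul, pow_zero] at hx
        have hx0 := ne_zero_of_pow hk hx
        have hx1 : quadraticChar F x = 1 := by
          rw [← mem_sq_class hk hc hα, cyc_mem hk hc hα (r := 2 * k) (by ring) (by norm_num),
            mul_comm 2 k, pow_mul, hx]; simp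
        symm
        apply Finset.sum_bij (fun y _ => x * y)
        · intro y hy; exact (scale_mem hk hc hα (by norm_num) hx y).2 hy
        · intro a _ b _ h; exact mul_left_cancel₀ hx0 h
        · intro y hy
          have e : x * (x⁻¹ * y) = y := by field_simp
          exact ⟨x⁻¹ * y, (scale_mem hk hc hα (by norm_num) hx _).1 (by rwa [e]), e⟩
        · intro y _
          rw [show x - x * y = x * (1 - y) by ring, map_mul, hx1, one_mul]
      have hsum2 : ∑ x ∈ cycClass α 4 0, ∑ y ∈ cycClass α 4 3, quadraticChar F (x - y) =
          k * ∑ y ∈ cycClass α 4 3, quadraticChar F (1 - y) := by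
        rw [sum_congr rfl hrow, sum_const, c0, nsmul_eq_mul]
      have hsum3 : ∑ x ∈ cycClass α 4 0, ∑ y ∈ cycClass α 4 3, quadraticChar F (y - x) =
          k * ∑ y ∈ cycClass α 4 3, quadraticChar F (1 - y) := by
        rw [← hsum2]
        exact sum_congr rfl (fun x _ => sum_congr rfl (fun y _ => hsym x y))
      rw [hsum2, hsum3]; ring
    rw [e1] at hs
    rw [← hS]
    apply mul_left_cancel₀ hk1
    linarith

lemma int_counts {k : ℕ} (hk : Odd k) (hc : Fintype.card F = 4 * k + 1) {α : F}
    (hα : IsPrimitiveElt α) :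
    intDiff (cycClass α 4 0) + intDiff (cycClass α 4 3) = ((k - 1) / 2) • (Gstar F).val := by
  have hk0 : 0 < k := hk.pos
  have hα0 := prim_ne_zero hk hc hα
  set g : F → ℕ := fun w => (extDiff (cycClass α 4 0) (cycClass α 4 0)).count w with hg
  have ginv4 : ∀ c, c ^ k = 1 → ∀ w, g (c * w) = g w := by
    intro c hck w
    have m0 := scale_mem hk hc hα (j := 0) (by norm_num) hck
    exact ext_scale (ne_zero_of_pow hk hck) m0 m0 w
  have gneg : ∀ w, g (-w) = g w := fun w => ext_neg _ _ w
  have ginv : ∀ c, quadraticChar F c = 1 → ∀ w, g (c * w) = g w := by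
    intro c h w
    rcases quartic_of_sq hk hc h with h | h
    · exact ginv4 c h w
    · rw [← gneg, ← neg_mul]; exact ginv4 _ h w
  have h3 : ∀ w, (extDiff (cycClass α 4 3) (cycClass α 4 3)).count (α ^ 3 * w) = g w := by
    intro w
    have : ∀ x, α ^ 3 * x ∈ cycClass α 4 3 ↔ x ∈ cycClass α 4 0 := by
      intro x
      rw [cyc_mem hk hc hα (r := k) rfl (by norm_num), cyc_mem hk hc hα (r := k) rfl (by norm_num),
        mul_pow, ← pow_mul, zero_mul, pow_zero]
      constructor
      · intro h
        exact mul_left_cancel₀ (pow_ne_zero _ hα0) (h.trans (mul_one _).symm)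
      · intro h; rw [h, mul_one]
    exact ext_scale (pow_ne_zero _ hα0) this this w
  have hchi_inv : quadraticChar F (α⁻¹) = -1 := by
    have h3 : quadraticChar F (α⁻¹) * quadraticChar F α = 1 := by
      rw [← map_mul, inv_mul_cancel₀ hα0, map_one]
    rw [chi_prim hk hc hα] at h3
    linarith
  have hcst : ∀ w ≠ 0, (intDiff (cycClass α 4 0) + intDiff (cycClass α 4 3)).count w
      = g 1 + g α := by
    intro w hw
    rw [Multiset.count_add, int_eq_ext _ hw, int_eq_ext _ hw]
    have e : w = α ^ 3 * ((α⁻¹) ^ 3 * w) := by field_simp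
    have e2 : (extDiff (cycClass α 4 3) (cycClass α 4 3)).count w = g ((α⁻¹) ^ 3 * w) := by
      rw [← h3, ← e]
    rw [e2]
    change g w + _ = _
    rcases quadraticChar_dichotomy hw with h | h
    · have e3 : g w = g 1 := by have := ginv w h 1; rwa [mul_one] at this
      have e4 : g ((α⁻¹) ^ 3 * w) = g α := by
        have := ginv ((α⁻¹) ^ 4 * w) (by rw [map_mul, map_pow, hchi_inv, h]; norm_num) α
        rw [← this]; congr 1; field_simp
      rw [e3, e4]
    · have e3 : g w = g α := by
        have := ginv (w * α⁻¹) (by rw [map_mul, h, hchi_inv]; norm_num) α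
        rwa [inv_mul_cancel_right₀ hα0] at this
      have e4 : g ((α⁻¹) ^ 3 * w) = g 1 := by
        have := ginv ((α⁻¹) ^ 3 * w) (by rw [map_mul, map_pow, hchi_inv, h]; norm_num) 1
        rwa [mul_one] at this
      rw [e3, e4, add_comm]
  have h0 : (intDiff (cycClass α 4 0) + intDiff (cycClass α 4 3)).count 0 = 0 := by
    rw [Multiset.count_add, int_zero, int_zero]
  have hsum := (sum_class hc (fun w => ((intDiff (cycClass α 4 0)
      + intDiff (cycClass α 4 3)).count w : ℤ)) (g 1 + g α : ℕ) (g 1 + g α : ℕ)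
    (by simp only [h0]; rfl)
    (fun x hx => by rw [hcst x (by rintro rfl; simp at hx)])
    (fun x hx => by rw [hcst x (by rintro rfl; simp at hx)])).1
  rw [sum_count, Multiset.card_add] at hsum
  have i0 := int_card (cycClass α 4 0)
  have i3 := int_card (cycClass α 4 3)
  rw [cyc_card hk hc hα (r := k) (e := 4) (j := 0) rfl (by norm_num)] at i0
  rw [cyc_card hk hc hα (r := k) (e := 4) (j := 3) rfl (by norm_num)] at i3
  have hval : g 1 + g α = (k - 1) / 2 := by
    have hk1 : (2 * k : ℤ) ≠ 0 := by positivity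
    have : ((g 1 + g α : ℕ) : ℤ) + (g 1 + g α : ℕ) = k - 1 := by
      apply mul_left_cancel₀ hk1
      rw [← hsum]
      zify at i0 i3
      push_cast
      linear_combination i0 + i3
    omega
  ext w
  rw [Multiset.count_nsmul, Multiset.count_eq_of_nodup (Finset.nodup _)]
  simp only [Finset.mem_val, Gstar, mem_erase, mem_univ, and_true]
  by_cases hw : w = 0
  · subst hw; rw [h0]; simp
  · rw [hcst w hw, hval]; simp [hw]

end Basics

/-- For a prime power `q = p^m ≡ 5 (mod 8)` with Katre–Rajwade normalized
representation `q = s² + t²`, the family `D = {C_0^4, C_3^4}` is: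
(i) if `t = -2`, a `(q,2,(q-1)/4;(q-5)/8,(q+3)/8)`-EPDF relative to `C_0^2` and a
`(q,2,(q-1)/4,(q-5)/8)`-DDF;
(ii) if `t = 2`, a `(q,2,(q-1)/4;(q+3)/8,(q-5)/8)`-EPDF relative to `C_0^2` and a
`(q,2,(q-1)/4,(q-5)/8)`-DDF. -/
theorem stmt_11 {F : Type*} [Field F] [Fintype F] [DecidableEq F]
    (q p m : ℕ) (hp : p.Prime) (hq : Fintype.card F = q) (hqpm : q = p ^ m)
    (hq8 : q % 8 = 5)
    (α : F) (hα : IsPrimitiveElt α)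
    (s t : ℤ) (hst : (q : ℤ) = s ^ 2 + t ^ 2)
    (hps : ¬((p : ℤ) ∣ s)) (hs4 : s % 4 = 1)
    (ht : (t : F) * α ^ ((q - 1) / 4) = (s : F)) :
    (t = -2 →
      IsEPDF ![cycClass α 4 0, cycClass α 4 3] q 2 (fun _ => (q - 1) / 4)
        (cycClass α 2 0) ((q - 5) / 8) ((q + 3) / 8) ∧
      IsDDF ![cycClass α 4 0, cycClass α 4 3] q 2 (fun _ => (q - 1) / 4)
        ((q - 5) / 8)) ∧
    (t = 2 →
      IsEPDF ![cycClass α 4 0, cycClass α 4 3] q 2 (fun _ => (q - 1) / 4)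
        (cycClass α 2 0) ((q + 3) / 8) ((q - 5) / 8) ∧
      IsDDF ![cycClass α 4 0, cycClass α 4 3] q 2 (fun _ => (q - 1) / 4)
        ((q - 5) / 8)) := by
  obtain ⟨k, hkq⟩ : ∃ k, q = 4 * k + 1 := ⟨q / 4, by omega⟩
  have hk : Odd k := Nat.odd_iff.2 (by omega)
  have hk0 : 0 < k := hk.pos
  have hc : Fintype.card F = 4 * k + 1 := hq.trans hkq
  have hqk : (q - 1) / 4 = k := by omega
  rw [hqk] at ht
  have hjac : jac F α = 2 * t :=
    jac_alpha hk hc hα hp (hqpm.symm.trans hkq) (by rw [← hst, hkq]; push_cast; rfl) hps hs4 ht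
  have hα0 := prim_ne_zero hk hc hα
  have m0 : ∀ x, x ∈ cycClass α 4 0 ↔ x ^ k = 1 := by
    intro x
    rw [cyc_mem hk hc hα (r := k) rfl (by norm_num), zero_mul, pow_zero]
  have m3 : ∀ x, x ∈ cycClass α 4 3 ↔ x ^ k = α ^ (3 * k) :=
    fun x => cyc_mem hk hc hα (r := k) rfl (by norm_num) x
  have hdisj : Disjoint (cycClass α 4 0) (cycClass α 4 3) := by
    rw [Finset.disjoint_left]
    intro x h0 h3
    rw [m0] at h0
    rw [m3, h0] at h3
    have := prim_inj hk hc hα (a := 0) (b := 3 * k) (by omega) (by omega) (by simpa using h3)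
    omega
  have z0 : (0 : F) ∉ cycClass α 4 0 := by
    rw [m0, zero_pow hk0.ne']; exact zero_ne_one
  have z3 : (0 : F) ∉ cycClass α 4 3 := by
    rw [m3, zero_pow hk0.ne']; exact fun h => pow_ne_zero _ hα0 h.symm
  have c0 := cyc_card hk hc hα (r := k) (e := 4) (j := 0) rfl (by norm_num)
  have c3 := cyc_card hk hc hα (r := k) (e := 4) (j := 3) rfl (by norm_num)
  have hzero : ∀ i, (0 : F) ∉ (![cycClass α 4 0, cycClass α 4 3] : Fin 2 → Finset F) i := by
    intro i; fin_cases i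
    · exact z0
    · exact z3
  have hcard : ∀ i, ((![cycClass α 4 0, cycClass α 4 3] : Fin 2 → Finset F) i).card
      = (q - 1) / 4 := by
    intro i; rw [hqk]; fin_cases i
    · exact c0
    · exact c3
  have hpair : Pairwise (fun i j => Disjoint
      ((![cycClass α 4 0, cycClass α 4 3] : Fin 2 → Finset F) i)
      ((![cycClass α 4 0, cycClass α 4 3] : Fin 2 → Finset F) j)) := by
    intro i j hij
    fin_cases i <;> fin_cases j
    · exact absurd rfl hij
    · exact hdisj
    · exact hdisj.symm
    · exact absurd rfl hij
  have hddf : IsDDF ![cycClass α 4 0, cycClass α 4 3] q 2 (fun _ => (q - 1) / 4)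
      ((q - 5) / 8) := by
    refine ⟨hq, rfl, hzero, hcard, hpair, ?_⟩
    rw [Fin.sum_univ_two, show (q - 5) / 8 = (k - 1) / 2 by omega]
    exact int_counts hk hc hα
  obtain ⟨A, B, hAB, hD, hM⟩ := ext_counts hk hc hα _ rfl hdisj
  have hext : ∑ i, ∑ j ∈ Finset.univ.erase i,
      extDiff ((![cycClass α 4 0, cycClass α 4 3] : Fin 2 → Finset F) i)
        ((![cycClass α 4 0, cycClass α 4 3] : Fin 2 → Finset F) j)
      = A • (cycClass α 2 0).val + B • (Gstar F \ cycClass α 2 0).val := by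
    rw [Fin.sum_univ_two, show (Finset.univ.erase (0 : Fin 2)) = {1} by decide,
      show (Finset.univ.erase (1 : Fin 2)) = {0} by decide, Finset.sum_singleton,
      Finset.sum_singleton, ← hM]
    rfl
  rw [hjac] at hD
  refine ⟨fun h => ⟨⟨hq, rfl, hzero, hcard, hpair, ?_⟩, hddf⟩,
    fun h => ⟨⟨hq, rfl, hzero, hcard, hpair, ?_⟩, hddf⟩⟩
  · rw [hext, show (q - 5) / 8 = A by omega, show (q + 3) / 8 = B by omega]
  · rw [hext, show (q - 5) / 8 = B by omega, show (q + 3) / 8 = A by omega]
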